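/- Let $C$ be a smooth non-hyperelliptic complex projective curve of genus $3$ and let $E$ be a stable, globally generated rank-two vector bundle on $C$ with $\det E\cong\omega_C^{\otimes 2}$ and $h^0(E)=4$. Let $\overline E$ be the dual span of $E$, that is, the dual of the kernel of the evaluation map $H^0(E)\otimes\mathcal O_C\to E$. Let $p:\mathbb P(E)=\operatorname{Proj}\operatorname{Sym}E\to C$ be the projection, let $n:\mathbb P(E)\to\mathbb P^3=\mathbb P H^0(E)^*$ be the tautological morphism, and let $R=n(\mathbb P(E))=\bigcup_{x\in C}\mathbb P(E_x^*)$ be the tautological scroll of $E$, of which $n:\mathbb P(E)\to R$ is the normalization. Let $o\in\operatorname{Sing}R$ and write $p_*n^*o=x_1+\dots+x_k$, where $n^*o$ is the scheme-theoretic fibre of $n$ over $o$. Then for every effective divisor $d\le x_1+\dots+x_k$ on $C$ one has $h^0(\overline E(-d))\ge 1$. -/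

import Mathlib

open CategoryTheory AlgebraicGeometry TopologicalSpace Opposite

noncomputable section

namespace OcticScroll

/-! ### Sheaves of modules on a scheme -/

section Modules

variable {X : Scheme.{0}}

/-- The presheaf of modules underlying an `𝒪_X`-module. -/
abbrev toPre (M : X.Modules) :
    PresheafOfModules.{0} (X.presheaf ⋙ forget₂ CommRingCat RingCat) := M.val

/-- The sheaf of modules associated with a presheaf of modules. -/
def sheafify (P : PresheafOfModules.{0} (X.presheaf ⋙ forget₂ CommRingCat RingCat)) :
    X.Modules :=
  (PresheafOfModules.sheafification (𝟙 X.ringCatSheaf.obj)).obj P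

/-- The stalk `M_x` is a module over the local ring `𝒪_{X,x}`. -/
instance stalkModule (M : X.Modules) (x : X) :
    Module (X.presheaf.stalk x) (M.presheaf.stalk x) :=
  letI h (Y : TopCat.{0}) (R : Y.Presheaf CommRingCat.{0})
    (N : PresheafOfModules.{0} (R ⋙ forget₂ _ _)) (y : Y) :
    Module (R.stalk y) ↑(TopCat.Presheaf.stalk N.presheaf y) := inferInstance
  h X.carrier X.presheaf (toPre M) x

theorem germ_smul (M : X.Modules) {x : X} {U : X.Opens} (hx : x ∈ U) (r : Γ(X, U))
    (m : Γ(M, U)) :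
    M.presheaf.germ U x hx (r • m) =
      X.presheaf.germ U x hx r • M.presheaf.germ U x hx m :=
  PresheafOfModules.germ_smul (R := X.presheaf) (toPre M) x U hx r m

/-- The structure sheaf `𝒪_X` as a module over itself. -/
def structureModule (X : Scheme.{0}) : X.Modules := SheafOfModules.unit X.ringCatSheaf

/-- A section of the module `𝒪_X` is a regular function. -/
def asFunction {U : X.Opens} (f : Γ(structureModule X, U)) : Γ(X, U) := f

/-- A regular function is a section of the module `𝒪_X`. -/
def ofFunction {U : X.Opens} (f : Γ(X, U)) : Γ(structureModule X, U) := f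

/-- `M` is locally free of rank `r`: every point has an open neighbourhood `U` with sections
`s₁, …, s_r` of `M` over `U` that are a basis of `M(V)` over `𝒪_X(V)` for all open `V ⊆ U`. -/
def IsVectorBundle (M : X.Modules) (r : ℕ) : Prop :=
  ∀ x : X, ∃ (U : X.Opens) (_ : x ∈ U) (s : Fin r → Γ(M, U)),
    ∀ (V : X.Opens) (h : V ≤ U),
      Function.Bijective fun f : Fin r → Γ(X, V) =>
        ∑ i, f i • M.presheaf.map (homOfLE h).op (s i)

/-- The tensor product of `𝒪_X`-modules. -/
def tensor (M N : X.Modules) : X.Modules :=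
  sheafify (PresheafOfModules.Monoidal.tensorObj (R := X.presheaf) (toPre M) (toPre N))

/-- A ring homomorphism `f : A → B` and an `f`-linear map `g : M → N` induce
`⋀² M → ⋀² N`, `m ∧ m' ↦ g m ∧ g m'`. -/
def wedgeMap {A B : Type} [CommRing A] [CommRing B] (f : A →+* B) {M N : Type}
    [AddCommGroup M] [Module A M] [AddCommGroup N] [Module B N] (g : M →ₛₗ[f] N) :
    ⋀[A]^2 M →ₛₗ[f] ⋀[B]^2 N :=
  letI : Module A (⋀[B]^2 N) := Module.compHom _ f
  letI alt : M [⋀^Fin 2]→ₗ[A] ⋀[B]^2 N :=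
    { toFun := fun v => exteriorPower.ιMulti B 2 (fun i => g (v i))
      map_update_add' := fun {dec} v i a b => by
        have h (c : M) : (fun j => g (Function.update v i c j)) =
            Function.update (fun j => g (v j)) i (g c) := by
          ext j; by_cases hj : j = i
          · subst hj; simp
          · simp [hj]
        rw [h, h, h, map_add, AlternatingMap.map_update_add]
      map_update_smul' := fun {dec} v i a b => by
        have h (c : M) : (fun j => g (Function.update v i c j)) =
            Function.update (fun j => g (v j)) i (g c) := by
          ext j; by_cases hj : j = i
          · subst hj; simp
          · simp [hj]
        rw [h, h, map_smulₛₗ, AlternatingMap.map_update_smul]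
        rfl
      map_eq_zero_of_eq' := fun v i j hv hij =>
        AlternatingMap.map_eq_zero_of_eq _ _ (congrArg g hv) hij }
  letI l : ⋀[A]^2 M →ₗ[A] ⋀[B]^2 N := exteriorPower.alternatingMapLinearEquiv alt
  { toFun := l, map_add' := l.map_add, map_smul' := fun a m => l.map_smul a m }

theorem wedgeMap_ιMulti {A B : Type} [CommRing A] [CommRing B] (f : A →+* B) {M N : Type}
    [AddCommGroup M] [Module A M] [AddCommGroup N] [Module B N] (g : M →ₛₗ[f] N)
    (v : Fin 2 → M) :
    wedgeMap f g (exteriorPower.ιMulti A 2 v) = exteriorPower.ιMulti B 2 (fun i => g (v i)) := by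
  let _ : Module A (⋀[B]^2 N) := Module.compHom _ f
  exact exteriorPower.alternatingMapLinearEquiv_apply_ιMulti _ v

section Wedge

variable {D : Type} [Category.{0} D] {R : Dᵒᵖ ⥤ CommRingCat.{0}}

/-- The restriction map `P(U) → P(V)` of a presheaf of modules, as a semilinear map. -/
def resMap (P : PresheafOfModules.{0} (R ⋙ forget₂ CommRingCat RingCat))
    {U V : Dᵒᵖ} (f : U ⟶ V) :
    P.obj U →ₛₗ[((R ⋙ forget₂ CommRingCat RingCat).map f).hom] P.obj V where
  toFun m := (P.map f).hom m
  map_add' a b := (P.map f).hom.map_add a b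
  map_smul' a m := (P.map f).hom.map_smul a m

theorem resMap_id (P : PresheafOfModules.{0} (R ⋙ forget₂ CommRingCat RingCat))
    (U : Dᵒᵖ) (m : P.obj U) : resMap P (𝟙 U) m = m := by
  change (P.map (𝟙 U)).hom m = m
  rw [P.map_id]
  rfl

theorem resMap_comp (P : PresheafOfModules.{0} (R ⋙ forget₂ CommRingCat RingCat))
    {U V W : Dᵒᵖ} (f : U ⟶ V) (g : V ⟶ W) (m : P.obj U) :
    resMap P (f ≫ g) m = resMap P g (resMap P f m) := by
  change (P.map (f ≫ g)).hom m = _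
  rw [P.map_comp]
  rfl

/-- The map `⋀² P(U) → ⋀² P(V)` induced by the restriction map `P(U) → P(V)`. -/
def wedgeRes (P : PresheafOfModules.{0} (R ⋙ forget₂ CommRingCat RingCat)) {U V : Dᵒᵖ}
    (f : U ⟶ V) :
    ModuleCat.of ((R ⋙ forget₂ CommRingCat RingCat).obj U)
      (⋀[(R ⋙ forget₂ CommRingCat RingCat).obj U]^2 (P.obj U)) ⟶
    (ModuleCat.restrictScalars ((R ⋙ forget₂ CommRingCat RingCat).map f).hom).obj
      (ModuleCat.of _ (⋀[(R ⋙ forget₂ CommRingCat RingCat).obj V]^2 (P.obj V))) :=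
  ModuleCat.ofHom
    (Y := (ModuleCat.restrictScalars ((R ⋙ forget₂ CommRingCat RingCat).map f).hom).obj
      (ModuleCat.of _ (⋀[(R ⋙ forget₂ CommRingCat RingCat).obj V]^2 (P.obj V))))
    { toFun := wedgeMap _ (resMap P f)
      map_add' := (wedgeMap _ (resMap P f)).map_add'
      map_smul' := (wedgeMap _ (resMap P f)).map_smul' }

theorem wedgeRes_apply (P : PresheafOfModules.{0} (R ⋙ forget₂ CommRingCat RingCat)) {U V : Dᵒᵖ}
    (f : U ⟶ V) (m : ⋀[(R ⋙ forget₂ CommRingCat RingCat).obj U]^2 (P.obj U)) :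
    (wedgeRes P f).hom m = wedgeMap _ (resMap P f) m := rfl

theorem wedgeMap_resMap_id (P : PresheafOfModules.{0} (R ⋙ forget₂ CommRingCat RingCat))
    (U : Dᵒᵖ) (m : ⋀[(R ⋙ forget₂ CommRingCat RingCat).obj U]^2 (P.obj U)) :
    wedgeMap _ (resMap P (𝟙 U)) m = m := by
  have hm : m ∈ Submodule.span ((R ⋙ forget₂ CommRingCat RingCat).obj U)
      (Set.range (exteriorPower.ιMulti ((R ⋙ forget₂ CommRingCat RingCat).obj U) 2
        (M := P.obj U))) := by
    rw [exteriorPower.ιMulti_span]; trivial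
  induction hm using Submodule.span_induction with
  | mem x hx =>
    obtain ⟨v, rfl⟩ := hx
    rw [wedgeMap_ιMulti]
    simp only [resMap_id]
  | zero => exact map_zero _
  | add x y _ _ hx hy => rw [map_add, hx, hy]
  | smul a x _ hx =>
    rw [map_smulₛₗ, hx]
    congr 1
    rw [CategoryTheory.Functor.map_id]
    rfl

theorem wedgeMap_resMap_comp (P : PresheafOfModules.{0} (R ⋙ forget₂ CommRingCat RingCat))
    {U V W : Dᵒᵖ} (f : U ⟶ V) (g : V ⟶ W)
    (m : ⋀[(R ⋙ forget₂ CommRingCat RingCat).obj U]^2 (P.obj U)) :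
    wedgeMap _ (resMap P (f ≫ g)) m = wedgeMap _ (resMap P g) (wedgeMap _ (resMap P f) m) := by
  have hm : m ∈ Submodule.span ((R ⋙ forget₂ CommRingCat RingCat).obj U)
      (Set.range (exteriorPower.ιMulti ((R ⋙ forget₂ CommRingCat RingCat).obj U) 2
        (M := P.obj U))) := by
    rw [exteriorPower.ιMulti_span]; trivial
  induction hm using Submodule.span_induction with
  | mem x hx =>
    obtain ⟨v, rfl⟩ := hx
    rw [wedgeMap_ιMulti, wedgeMap_ιMulti, wedgeMap_ιMulti]
    simp only [resMap_comp]
  | zero => simp only [map_zero]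
  | add x y _ _ hx hy => rw [map_add, hx, hy, map_add, map_add]
  | smul a x _ hx =>
    rw [map_smulₛₗ, hx, map_smulₛₗ, map_smulₛₗ]
    congr 1
    rw [CategoryTheory.Functor.map_comp]
    rfl

/-- The presheaf `U ↦ ⋀² P(U)`. -/
def wedgePresheaf (P : PresheafOfModules.{0} (R ⋙ forget₂ CommRingCat RingCat)) :
    PresheafOfModules.{0} (R ⋙ forget₂ CommRingCat RingCat) where
  obj U := ModuleCat.of _ (⋀[(R ⋙ forget₂ CommRingCat RingCat).obj U]^2 (P.obj U))
  map f := wedgeRes P f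
  map_id U := ModuleCat.hom_ext (LinearMap.ext fun m => wedgeMap_resMap_id P U m)
  map_comp f g := ModuleCat.hom_ext (LinearMap.ext fun m => wedgeMap_resMap_comp P f g m)

end Wedge

/-- The determinant `⋀² M` of a rank-two bundle. -/
def detTwo (M : X.Modules) : X.Modules := sheafify (wedgePresheaf (R := X.presheaf) (toPre M))

/-- The morphism `𝒪_X → M`, `f ↦ f s`, given by a global section `s` of `M`. -/
def sectionHom (M : X.Modules) (s : Γ(M, ⊤)) : structureModule X ⟶ M :=
  (SheafOfModules.unitHomEquiv (R := X.ringCatSheaf) M).symm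
    (PresheafOfModules.sectionsMk
      (fun U => M.presheaf.map (homOfLE (le_top : U.unop ≤ ⊤)).op s) (fun U V f => by
        refine ((ConcreteCategory.comp_apply (M.presheaf.map _) (M.presheaf.map f) s).symm.trans ?_)
        rw [← Functor.map_comp]
        rfl))

theorem sectionHom_app (M : X.Modules) (s : Γ(M, ⊤)) (U : X.Opens)
    (f : Γ(structureModule X, U)) :
    (sectionHom M s).app U f =
      asFunction f • M.presheaf.map (homOfLE (le_top : U ≤ ⊤)).op s := by
  rfl

end Modules

/-! ### Smooth projective curves over `ℂ` -/

/-- A smooth projective complex curve: an integral scheme, proper and smooth of relative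
dimension one over `ℂ` (for curves, proper is the same as projective). -/
structure SmoothProjectiveCurve where
  X : Scheme.{0}
  str : X ⟶ Spec (CommRingCat.of ℂ)
  isIntegral : IsIntegral X
  isProper : IsProper str
  smooth : SmoothOfRelativeDimension 1 str

attribute [instance] SmoothProjectiveCurve.isIntegral SmoothProjectiveCurve.isProper
  SmoothProjectiveCurve.smooth

variable {C : SmoothProjectiveCurve}

instance : IsLocallyNoetherian C.X := LocallyOfFiniteType.isLocallyNoetherian C.str

/-- The points of the curve, in the classical sense. -/
abbrev ClosedPoint (C : SmoothProjectiveCurve) : Type := {x : C.X // IsClosed ({x} : Set C.X)}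

/-- The constant functions `ℂ → 𝒪_C(U)`. -/
def constants (U : C.X.Opens) : ℂ →+* Γ(C.X, U) :=
  ((Scheme.ΓSpecIso (CommRingCat.of ℂ)).inv ≫ C.str.appTop ≫
    C.X.presheaf.map (homOfLE (le_top : U ≤ ⊤)).op).hom

theorem map_constants {U V : C.X.Opens} (h : V ≤ U) (c : ℂ) :
    C.X.presheaf.map (homOfLE h).op (constants U c) = constants V c := by
  change (C.X.presheaf.map (homOfLE _).op ≫ C.X.presheaf.map (homOfLE h).op).hom _ = _
  rw [← Functor.map_comp]
  rfl

/-- The local rings of `C`, in particular its function field, are `ℂ`-algebras. -/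
instance stalkAlgebra (x : C.X) : Algebra ℂ (C.X.presheaf.stalk x) :=
  ((C.X.presheaf.germ ⊤ x trivial).hom.comp (constants ⊤)).toAlgebra

/-- The sections of an `𝒪_C`-module over an open set form a complex vector space. -/
instance sectionsModule (M : C.X.Modules) (U : C.X.Opens) : Module ℂ Γ(M, U) :=
  Module.compHom _ (constants U)

/-- The space `H⁰(M)` of global sections. -/
abbrev H0 (M : C.X.Modules) : Type := Γ(M, ⊤)

/-- `h⁰(M) = dim H⁰(M)`. -/
def h0 (M : C.X.Modules) : Cardinal := Module.rank ℂ (H0 M)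

/-- The germ at `x` of a global section. -/
def germAt (M : C.X.Modules) (x : C.X) (s : H0 M) : M.presheaf.stalk x :=
  M.presheaf.germ ⊤ x trivial s

theorem germAt_add (M : C.X.Modules) (x : C.X) (s t : H0 M) :
    germAt M x (s + t) = germAt M x s + germAt M x t :=
  map_add (M.presheaf.germ ⊤ x trivial).hom s t

theorem germAt_smul (M : C.X.Modules) (x : C.X) (c : ℂ) (s : H0 M) :
    germAt M x (c • s) = algebraMap ℂ (C.X.presheaf.stalk x) c • germAt M x s :=
  germ_smul M (U := ⊤) trivial (constants ⊤ c) s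

/-- The constant presheaf `ℂ` maps to `𝒪_C`. -/
def constantsHom (C : SmoothProjectiveCurve) :
    (Functor.const _).obj (CommRingCat.of ℂ) ⟶ C.X.presheaf where
  app U := CommRingCat.ofHom (constants U.unop)
  naturality U V f := by
    ext c
    exact (map_constants f.unop.le c).symm

/-- The canonical sheaf `ω_C = Ω_{C/ℂ}`: the sheaf associated with `U ↦ Ω_{𝒪_C(U)/ℂ}`. -/
def canonicalSheaf (C : SmoothProjectiveCurve) : C.X.Modules :=
  sheafify (PresheafOfModules.DifferentialsConstruction.relativeDifferentials' (constantsHom C))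

/-- The genus `h⁰(ω_C)`. -/
def genus (C : SmoothProjectiveCurve) : Cardinal := h0 (canonicalSheaf C)

/-- `C` has a morphism of degree two onto `ℙ¹`, that is, a rational function `f` such that the
function field has degree two over `ℂ(f)`. -/
def HasDegreeTwoMap (C : SmoothProjectiveCurve) : Prop :=
  ∃ f : C.X.functionField,
    Module.finrank (IntermediateField.adjoin ℂ {f}) C.X.functionField = 2

/-! ### Degree, stability, global generation -/

/-- The map from the stalk at `x` to the stalk at the generic point (rational sections). -/
def toGeneric (M : C.X.Modules) (x : C.X) :
    M.presheaf.stalk x ⟶ M.presheaf.stalk (genericPoint C.X) :=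
  M.presheaf.stalkSpecializes ((genericPoint_spec C.X).specializes trivial)

/-- The bundle `M` of rank `r` has degree `n`: there is a rational frame `b₁, …, b_r` of `M` such
that the rational section `b₁ ∧ ⋯ ∧ b_r` of `det M` has a divisor of degree `n`. The order of
this section at `x` is that of `det A`, where `A` writes the `b_j` in a basis of the stalk `M_x`. -/
def HasDegree (M : C.X.Modules) (r : ℕ) (n : ℤ) : Prop :=
  ∃ (b : Module.Basis (Fin r) C.X.functionField (M.presheaf.stalk (genericPoint C.X)))
    (c : ∀ x : ClosedPoint C, Module.Basis (Fin r) (C.X.presheaf.stalk x.1) (M.presheaf.stalk x.1))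
    (A : ClosedPoint C → Matrix (Fin r) (Fin r) C.X.functionField),
    (∀ x j, b j = ∑ i, A x i j • toGeneric M x.1 (c x i)) ∧
    n = ∑ᶠ x : ClosedPoint C, C.X.ord (A x).det x.1

/-- Slope stability of a rank-two bundle: `deg L < deg E / 2` for every invertible subsheaf. -/
def IsStable (E : C.X.Modules) : Prop :=
  ∀ (L : C.X.Modules) (i : L ⟶ E), IsVectorBundle L 1 → Mono i →
    ∀ m n : ℤ, HasDegree L 1 m → HasDegree E 2 n → 2 * m < n

/-- Every stalk is generated by germs of global sections. -/
def IsGloballyGenerated (E : C.X.Modules) : Prop :=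
  ∀ x : C.X, Submodule.span (C.X.presheaf.stalk x) (Set.range (germAt E x)) = ⊤

/-! ### The dual span -/

/-- The trivial bundle `H⁰(E) ⊗ 𝒪_C`, as the free module on a basis of `H⁰(E)`. -/
def trivialBundle (E : C.X.Modules) : C.X.Modules :=
  ∐ fun _ : Module.Free.ChooseBasisIndex ℂ (H0 E) => structureModule C.X

/-- The evaluation `H⁰(E) ⊗ 𝒪_C → E`. -/
def evaluation (E : C.X.Modules) : trivialBundle E ⟶ E :=
  Limits.Sigma.desc fun i => sectionHom E (Module.Free.chooseBasis ℂ (H0 E) i)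

/-- The kernel of the evaluation; the dual span `Ē` of `E` is its dual. -/
def evalKernel (E : C.X.Modules) : C.X.Modules := Limits.kernel (evaluation E)

theorem scalar_app (c : ℂ) (U : C.X.Opens) (f : Γ(structureModule C.X, U)) :
    asFunction ((sectionHom (structureModule C.X) (ofFunction (constants ⊤ c))).app U f) =
      asFunction f * constants U c := by
  refine (congrArg asFunction (sectionHom_app _ _ U f)).trans ?_
  exact congrArg (fun t => asFunction f * t) (map_constants le_top c)

theorem scalar_ext {φ ψ : structureModule C.X ⟶ structureModule C.X}
    (h : ∀ (U : C.X.Opens) (f : Γ(structureModule C.X, U)),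
      asFunction (φ.app U f) = asFunction (ψ.app U f)) : φ = ψ :=
  Scheme.Modules.hom_ext _ _ fun U => by
    ext f
    exact h U f

/-- Multiplication by constants on `𝒪_C`. -/
def scalarEnd (C : SmoothProjectiveCurve) : ℂ →+* End (structureModule C.X) where
  toFun c := sectionHom (structureModule C.X) (ofFunction (constants ⊤ c))
  map_one' := scalar_ext fun U f => (scalar_app 1 U f).trans (by rw [map_one, mul_one]; rfl)
  map_mul' a b := scalar_ext fun U f => by
    refine (scalar_app (a * b) U f).trans (Eq.trans ?_ ((scalar_app a U _).trans
      (congrArg (fun t => t * constants U a) (scalar_app b U f))).symm)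
    rw [map_mul, mul_assoc, mul_comm (constants U a)]
  map_zero' := scalar_ext fun U f => (scalar_app 0 U f).trans (by rw [map_zero, mul_zero]; rfl)
  map_add' a b := scalar_ext fun U f => by
    refine (scalar_app (a + b) U f).trans (Eq.trans ?_
      (congrArg₂ (fun t u => t + u) (scalar_app a U f) (scalar_app b U f)).symm)
    rw [map_add, mul_add]

/-- `H⁰(M^*)`, the space of global sections of the dual of `M`: the `𝒪_C`-linear maps
`M → 𝒪_C`. -/
abbrev DualSections (M : C.X.Modules) : Type := M ⟶ structureModule C.X

instance dualSectionsModule (M : C.X.Modules) : Module ℂ (DualSections M) :=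
  Module.compHom _ (scalarEnd C)

theorem dualSections_smul_app (M : C.X.Modules) (c : ℂ) (φ : DualSections M) (U : C.X.Opens)
    (m : Γ(M, U)) : asFunction ((c • φ).app U m) = asFunction (φ.app U m) * constants U c :=
  scalar_app c U (φ.app U m)

/-- `H⁰(M^*(-d))` for a bundle `M` and an effective divisor `d`: the sections of `M^*` that vanish
along `d`, that is, the `𝒪_C`-linear maps from `M` to the ideal sheaf `𝒪_C(-d) ⊆ 𝒪_C`. -/
def dualTwistSections (M : C.X.Modules) (d : ClosedPoint C →₀ ℕ) :
    Submodule ℂ (DualSections M) where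
  carrier := {φ | ∀ (U : C.X.Opens) (m : Γ(M, U)) (x : ClosedPoint C) (hx : x.1 ∈ U),
    C.X.presheaf.germ U x.1 hx (asFunction (φ.app U m)) ∈
      IsLocalRing.maximalIdeal (C.X.presheaf.stalk x.1) ^ d x}
  add_mem' {φ ψ} hφ hψ U m x hx := by
    have h := Ideal.add_mem _ (hφ U m x hx) (hψ U m x hx)
    rw [← map_add] at h
    exact h
  zero_mem' U m x hx := by
    have h : C.X.presheaf.germ U x.1 hx (0 : Γ(C.X, U)) ∈
        IsLocalRing.maximalIdeal (C.X.presheaf.stalk x.1) ^ d x := by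
      rw [map_zero]; exact Ideal.zero_mem _
    exact h
  smul_mem' c φ hφ U m x hx := by
    rw [dualSections_smul_app, map_mul]
    exact Ideal.mul_mem_right _ _ (hφ U m x hx)

/-- `h⁰(Ē(-d))`, where `Ē` is the dual span of `E`. -/
def h0DualSpanTwist (E : C.X.Modules) (d : ClosedPoint C →₀ ℕ) : Cardinal :=
  Module.rank ℂ (dualTwistSections (evalKernel E) d)

/-! ### The tautological scroll `R ⊂ ℙ(H⁰(E)^*)` and its singular points -/

open scoped LinearAlgebra.Projectivization

/-- The projective space `ℙ(H⁰(E)^*)` of lines in `H⁰(E)^*`. -/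
abbrev PH (E : C.X.Modules) : Type := ℙ ℂ (Module.Dual ℂ (H0 E))

/-- The ruling `R_x = ℙ(E_x^*) ⊂ ℙ(H⁰(E)^*)`: the points `[ξ ∘ ev_x]`, where `ξ` is a linear form
on the fibre of `E` at `x`, i.e. an `𝒪_{C,x}`-linear map from the stalk to the residue field. -/
def ruling (E : C.X.Modules) (x : ClosedPoint C) : Set (PH E) :=
  {o | ∃ ξ : E.presheaf.stalk x.1 →ₗ[C.X.presheaf.stalk x.1]
      IsLocalRing.ResidueField (C.X.presheaf.stalk x.1),
    ∀ s : H0 E, algebraMap ℂ (IsLocalRing.ResidueField (C.X.presheaf.stalk x.1)) (o.rep s) =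
      ξ (germAt E x.1 s)}

/-- The tautological scroll `R`, the image of `ℙ(E)`. -/
def scroll (E : C.X.Modules) : Set (PH E) := ⋃ x : ClosedPoint C, ruling E x

/-- The differential at `v ∈ V^*` of the polynomial function on `V^*` given by a polynomial in
the elements of `V`. -/
def differential {V : Type} [AddCommGroup V] [Module ℂ V] (v : Module.Dual ℂ V)
    (F : MvPolynomial V ℂ) : Module.Dual ℂ (Module.Dual ℂ V) :=
  ∑ s ∈ F.vars, MvPolynomial.eval (fun t => v t) (MvPolynomial.pderiv s F) • Module.Dual.eval ℂ V s

/-- The Zariski tangent space at `o` of the affine cone over `Z ⊆ ℙ(V^*)`: the common zeros of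
the differentials at `o` of the homogeneous polynomials vanishing on `Z`. -/
def coneTangentSpace {V : Type} [AddCommGroup V] [Module ℂ V] (Z : Set (ℙ ℂ (Module.Dual ℂ V)))
    (o : ℙ ℂ (Module.Dual ℂ V)) : Submodule ℂ (Module.Dual ℂ V) :=
  ⨅ F ∈ {F : MvPolynomial V ℂ | (∃ n, F.IsHomogeneous n) ∧
      ∀ q ∈ Z, MvPolynomial.eval (fun t => q.rep t) F = 0}, LinearMap.ker (differential o.rep F)

/-- `Sing R`: the points of the surface `R` at which the Zariski tangent space has dimension
larger than two (so the tangent space of the three-dimensional cone over `R` has dimension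
larger than three). -/
def singularLocus (E : C.X.Modules) : Set (PH E) :=
  {o ∈ scroll E | 3 < Module.finrank ℂ (coneTangentSpace (scroll E) o)}

/-! ### The tautological map `n : ℙ(E) → R` and the divisor `p_* n^* o` -/

section Charts

variable {k A V M B : Type} [Field k] [CommRing A] [Algebra k A] [AddCommGroup V] [Module k V]
  [AddCommGroup M] [Module A M] [CommRing B]

/-- The coordinate ring `S/(e - 1)`, `S = Sym M`, of the affine chart `D₊(e)`, `e ∈ M`, of
`ℙ(M) = Proj S`. -/
def ProjChart (A : Type) {M : Type} [CommRing A] [AddCommGroup M] [Module A M] (e : M) : Type :=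
  SymmetricAlgebra A M ⧸ Ideal.span {SymmetricAlgebra.ι A M e - 1}

instance (e : M) : CommRing (ProjChart A e) :=
  inferInstanceAs (CommRing (SymmetricAlgebra A M ⧸ Ideal.span {SymmetricAlgebra.ι A M e - 1}))

instance (e : M) : Algebra A (ProjChart A e) :=
  inferInstanceAs (Algebra A (SymmetricAlgebra A M ⧸ Ideal.span {SymmetricAlgebra.ι A M e - 1}))

/-- The restriction of polynomials to the chart. -/
def toChart (A : Type) {M : Type} [CommRing A] [AddCommGroup M] [Module A M] (e : M) :
    SymmetricAlgebra A M →ₐ[A] ProjChart A e :=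
  Ideal.Quotient.mkₐ A (Ideal.span {SymmetricAlgebra.ι A M e - 1})

/-- The linear coordinates on the chart `D₊(e)`: the function `m / e`, for `m ∈ M`. -/
def chartCoord (A : Type) {M : Type} [CommRing A] [AddCommGroup M] [Module A M] (e : M) :
    M →ₗ[A] ProjChart A e :=
  (toChart A e).toLinearMap ∘ₗ SymmetricAlgebra.ι A M

theorem chartCoord_self (e : M) : chartCoord A e e = 1 := by
  refine Eq.trans ?_ (map_one (toChart A e))
  exact Ideal.Quotient.eq.mpr (Ideal.subset_span rfl)

/-- The universal property of the chart: for a ring homomorphism `f : A → B`, an `f`-linear map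
`l : M → B` with `l e = 1` extends to a ring homomorphism on the functions on `D₊(e)`. -/
def chartLift (e : M) (f : A →+* B) (l : M →ₛₗ[f] B) (hl : l e = 1) : ProjChart A e →+* B :=
  letI : Algebra A B := f.toAlgebra
  letI l' : M →ₗ[A] B :=
    { toFun := l, map_add' := l.map_add, map_smul' := fun a m => l.map_smulₛₗ a m }
  Ideal.Quotient.lift _ (SymmetricAlgebra.lift l').toRingHom (fun a ha => by
    have h : Ideal.span {SymmetricAlgebra.ι A M e - 1} ≤
        RingHom.ker (SymmetricAlgebra.lift l').toRingHom := by
      rw [Ideal.span_singleton_le_iff_mem, RingHom.mem_ker, map_sub, map_one, sub_eq_zero]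
      exact (SymmetricAlgebra.lift_ι_apply l' e).trans hl
    exact h ha)

theorem chartLift_coord (e : M) (f : A →+* B) (l : M →ₛₗ[f] B) (hl : l e = 1) (m : M) :
    chartLift e f l hl (chartCoord A e m) = l m := by
  let _ : Algebra A B := f.toAlgebra
  exact SymmetricAlgebra.lift_ι_apply
    { toFun := l, map_add' := l.map_add, map_smul' := fun a m => l.map_smulₛₗ a m } m

theorem chartLift_algebraMap (e : M) (f : A →+* B) (l : M →ₛₗ[f] B) (hl : l e = 1) (a : A) :
    chartLift e f l hl (algebraMap A (ProjChart A e) a) = f a := by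
  let _ : Algebra A B := f.toAlgebra
  exact (SymmetricAlgebra.lift
    ({ toFun := l, map_add' := l.map_add, map_smul' := fun a m => l.map_smulₛₗ a m } :
      M →ₗ[A] B)).commutes a

/-- For a `k`-algebra `A`, an `A`-module `M` and a `k`-linear map `g : V → M`, the map of
coordinate rings of the map of charts from `D₊(g s₀) ⊂ ℙ(M)` to `D₊(s₀) ⊂ ℙ(V)`, given by
`s / s₀ ↦ g s / g s₀`. -/
def chartMap (g : V →ₛₗ[algebraMap k A] M) (s₀ : V) : ProjChart k s₀ →+* ProjChart A (g s₀) :=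
  chartLift s₀ ((algebraMap A (ProjChart A (g s₀))).comp (algebraMap k A))
    { toFun := fun s => chartCoord A (g s₀) (g s)
      map_add' := fun s t => by rw [map_add, map_add]
      map_smul' := fun c s => by
        rw [map_smulₛₗ, map_smul, Algebra.smul_def, RingHom.comp_apply, smul_eq_mul] }
    (chartCoord_self (g s₀))

/-- The point `[v]` of `D₊(s₀) ⊂ ℙ(V)`, as evaluation of functions: `s / s₀ ↦ v s / v s₀`. -/
def pointEval (v : Module.Dual k V) (s₀ : V) (h : v s₀ ≠ 0) : ProjChart k s₀ →+* k :=
  chartLift s₀ (RingHom.id k) ((v s₀)⁻¹ • v) (by simp [h])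

/-- The ring of functions on the scheme-theoretic fibre over the point `[v]` of the map
`ℙ(M) → ℙ(V)` given by `g : V → M`: the fibre lies in the chart `D₊(g s₀)` as `v s₀ ≠ 0`, and its
ideal there is generated by the pull-backs of the functions on `D₊(s₀)` that vanish at `[v]`. -/
def FiberRing (g : V →ₛₗ[algebraMap k A] M) (v : Module.Dual k V) (s₀ : V) (h : v s₀ ≠ 0) : Type :=
  ProjChart A (g s₀) ⧸ (RingHom.ker (pointEval v s₀ h)).map (chartMap g s₀)

instance (g : V →ₛₗ[algebraMap k A] M) (v : Module.Dual k V) (s₀ : V) (h : v s₀ ≠ 0) :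
    CommRing (FiberRing g v s₀ h) :=
  inferInstanceAs (CommRing
    (ProjChart A (g s₀) ⧸ (RingHom.ker (pointEval v s₀ h)).map (chartMap g s₀)))

instance (g : V →ₛₗ[algebraMap k A] M) (v : Module.Dual k V) (s₀ : V) (h : v s₀ ≠ 0) :
    Algebra A (FiberRing g v s₀ h) :=
  inferInstanceAs (Algebra A
    (ProjChart A (g s₀) ⧸ (RingHom.ker (pointEval v s₀ h)).map (chartMap g s₀)))

end Charts

/-- The evaluation `H⁰(E) → E_x` at the stalk. It induces the tautological map `n` from
`ℙ(E) ×_C Spec 𝒪_{C,x} = Proj Sym E_x` to `ℙ(H⁰(E)^*) = Proj Sym H⁰(E)`. -/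
def germMap (E : C.X.Modules) (x : C.X) :
    H0 E →ₛₗ[algebraMap ℂ (C.X.presheaf.stalk x)] E.presheaf.stalk x where
  toFun := germAt E x
  map_add' := germAt_add E x
  map_smul' := germAt_smul E x

theorem exists_rep_ne_zero {E : C.X.Modules} (o : PH E) : ∃ s : H0 E, o.rep s ≠ 0 := by
  by_contra! h
  exact o.rep_nonzero (LinearMap.ext h)

/-- The multiplicity at `x` of the divisor `p_* n^* o` on `C`: the length over `𝒪_{C,x}` of the
part over `x` of the scheme-theoretic fibre `n⁻¹(o)`. -/
def fiberDivisor (E : C.X.Modules) (o : PH E) (x : ClosedPoint C) : ℕ∞ :=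
  Module.length (C.X.presheaf.stalk x.1)
    (FiberRing (germMap E x.1) o.rep (exists_rep_ne_zero o).choose (exists_rep_ne_zero o).choose_spec)

end OcticScroll

end

/-!
Let `K` be the kernel of the evaluation `H⁰(E) ⊗ 𝒪_C → E` and let `v ∈ H⁰(E)^*` represent `o`.
The required section of `Ē = K^*` is the restriction of `v ⊗ id` to `K`.

It vanishes along `p_* n^* o`: a germ `∑ sᵢ ⊗ aᵢ` of `K` at `x` satisfies `∑ aᵢ sᵢ = 0` in `E_x`,
while on the fibre of `n` over `o` the ratio `sᵢ / s₀` equals the constant `v(sᵢ) / v(s₀)`. Hence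
`∑ aᵢ v(sᵢ)` vanishes on that fibre. Its coordinate ring is a quotient of the discrete valuation
ring `𝒪_{C,x}`, because `E` is globally generated, and its length is the multiplicity of `p_* n^* o`
at `x`.

It is not zero: otherwise `v ⊗ id` factors through a morphism `π : E → 𝒪_C`. If `v(s) = 1`, then
`s` is a section of `π`, so that `E ≅ 𝒪_C ⊕ L`, which is impossible for a stable `E` of rank two.
-/

noncomputable section

namespace OcticScroll

section Length

variable {A : Type*} [CommRing A]

theorem length_le_add_of_exact {N M P : Type*} [AddCommGroup N] [Module A N] [AddCommGroup M]
    [Module A M] [AddCommGroup P] [Module A P] {f : N →ₗ[A] M} {g : M →ₗ[A] P}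
    (hg : Function.Surjective g) (hfg : Function.Exact f g) :
    Module.length A M ≤ Module.length A N + Module.length A P := by
  rw [Module.length_eq_add_of_exact f.range.subtype g f.range.subtype_injective hg
    (LinearMap.exact_iff.mpr (by simpa using hfg.linearMap_ker_eq))]
  gcongr
  exact Module.length_le_of_surjective f.rangeRestrict f.surjective_rangeRestrict

open scoped Pointwise in
theorem ord_mul_le (a b : A) : Ring.ord A (a * b) ≤ Ring.ord A a + Ring.ord A b := by
  have hspan : Ideal.span {a * b} = b • Ideal.span {a} := by
    rw [mul_comm, ← smul_eq_mul b, ← Submodule.singleton_set_smul, ← Ideal.submodule_span_eq,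
      Submodule.set_smul_span]
    simp
  rw [Ring.ord, hspan]
  exact length_le_add_of_exact (Ideal.quotOfMul_surjective _) (Ideal.exact_mulQuot_quotOfMul _)

theorem ord_pow_le (a : A) (n : ℕ) : Ring.ord A (a ^ n) ≤ n • Ring.ord A a := by
  induction n with
  | zero => simp
  | succ n ih =>
    rw [pow_succ, succ_nsmul]
    exact (ord_mul_le _ _).trans (add_le_add_left ih _)

theorem length_le_ord {B : Type*} [CommRing B] [Algebra A B]
    (hB : Function.Surjective (algebraMap A B)) {a : A} (ha : algebraMap A B a = 0) :
    Module.length A B ≤ Ring.ord A a := by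
  have hle : Ideal.span {a} ≤ RingHom.ker (algebraMap A B) := by
    rwa [Ideal.span_singleton_le_iff_mem, RingHom.mem_ker]
  exact Module.length_le_of_surjective
    (Ideal.Quotient.liftₐ (Ideal.span {a}) (Algebra.ofId A B) hle).toLinearMap
    (Ideal.Quotient.lift_surjective_of_surjective _ hle hB)

theorem mem_maximalIdeal_pow_of_le_length [IsLocalRing A]
    (hA : (IsLocalRing.maximalIdeal A).IsPrincipal) {B : Type*} [CommRing B] [Algebra A B]
    (hB : Function.Surjective (algebraMap A B)) {a : A} (ha : algebraMap A B a = 0) {n : ℕ}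
    (hn : (n : ℕ∞) ≤ Module.length A B) : a ∈ IsLocalRing.maximalIdeal A ^ n := by
  obtain ⟨ϖ, hϖ⟩ := hA
  rw [Ideal.submodule_span_eq] at hϖ
  have hord : Ring.ord A ϖ = 1 := by
    rw [Ring.ord, ← hϖ, Module.length_eq_one_iff, isSimpleModule_iff_isCoatom]
    exact (IsLocalRing.maximalIdeal.isMaximal A).out
  induction n with
  | zero => simp
  | succ n ih =>
    obtain ⟨u, rfl⟩ : ϖ ^ n ∣ a := by
      rw [← Ideal.mem_span_singleton, ← Ideal.span_singleton_pow, ← hϖ]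
      exact ih (le_trans (by exact_mod_cast n.le_succ) hn)
    have hu : u ∈ IsLocalRing.maximalIdeal A := by
      rw [IsLocalRing.mem_maximalIdeal]
      intro hunit
      rw [map_mul, (hunit.map _).mul_left_eq_zero] at ha
      have hle := hn.trans ((length_le_ord hB ha).trans (ord_pow_le ϖ n))
      rw [hord, nsmul_one] at hle
      exact absurd (Nat.cast_le.mp hle) n.lt_succ_self.not_ge
    rw [pow_succ]
    refine Ideal.mul_mem_mul (Ideal.pow_mem_pow ?_ n) hu
    rw [hϖ]
    exact Ideal.mem_span_singleton_self ϖ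

end Length

section Smooth

universe u

open IsLocalRing TensorProduct in
theorem maximalIdeal_isPrincipal_of_finrank_differentials_le_one (k : Type*) {A : Type*} [Field k]
    [PerfectField k] [CommRing A] [IsLocalRing A] [IsNoetherianRing A] [Algebra k A]
    [Algebra.EssFiniteType k A] [Algebra.FormallySmooth k A] [Module.Finite A Ω[A⁄k]]
    [Module.Free A Ω[A⁄k]] (h : Module.finrank A Ω[A⁄k] ≤ 1) :
    (maximalIdeal A).IsPrincipal := by
  have hsurj : Function.Surjective (algebraMap A (ResidueField A)) := residue_surjective
  have : Algebra.EssFiniteType k (ResidueField A) := .comp k A _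
  obtain ⟨f, hf⟩ : ∃ f : CotangentSpace A →ₗ[A] ResidueField A ⊗[A] Ω[A⁄k],
      Function.Injective f := by
    suffices ∀ I : Ideal A, I = RingHom.ker (residue A) →
        ∃ f : I.Cotangent →ₗ[A] ResidueField A ⊗[A] Ω[A⁄k], Function.Injective f from
      this _ ker_residue.symm
    rintro _ rfl
    exact ⟨_, (Algebra.FormallySmooth.kerCotangentToTensor_injective_iff hsurj).mpr inferInstance⟩
  rw [← finrank_cotangentSpace_le_one_iff]
  calc Module.finrank (ResidueField A) (CotangentSpace A)
      ≤ Module.finrank (ResidueField A) (ResidueField A ⊗[A] Ω[A⁄k]) :=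
        LinearMap.finrank_le_finrank_of_injective
          (f := LinearMap.extendScalarsOfSurjective hsurj f) hf
    _ = Module.finrank A Ω[A⁄k] := Module.finrank_baseChange
    _ ≤ 1 := h

theorem maximalIdeal_isPrincipal_of_isStandardSmooth (k S : Type*) {A : Type*} [Field k]
    [PerfectField k] [CommRing S] [Algebra k S] [Algebra.IsStandardSmoothOfRelativeDimension 1 k S]
    [CommRing A] [IsLocalRing A] [IsNoetherianRing A] [Algebra k A] [Algebra S A]
    [IsScalarTower k S A] (p : Ideal S) [p.IsPrime] [IsLocalization.AtPrime A p] :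
    (IsLocalRing.maximalIdeal A).IsPrincipal := by
  have : Algebra.IsStandardSmooth k S :=
    Algebra.IsStandardSmoothOfRelativeDimension.isStandardSmooth 1
  have : Nontrivial S := (algebraMap S A).domain_nontrivial
  have : Algebra.FormallyEtale S A := .of_isLocalization p.primeCompl
  have : Algebra.FormallySmooth k A := .comp k S A
  have : Algebra.EssFiniteType S A := .of_isLocalization _ p.primeCompl
  have : Algebra.EssFiniteType k A := .comp k S A
  let e := KaehlerDifferential.tensorKaehlerEquivOfFormallyEtale k S A
  have : Module.Free A (Ω[A⁄k]) := .of_equiv e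
  have : Module.Finite A (Ω[A⁄k]) := .equiv e
  refine maximalIdeal_isPrincipal_of_finrank_differentials_le_one k ?_
  rw [← e.finrank_eq, Module.finrank_baseChange, Module.finrank,
    Algebra.IsStandardSmoothOfRelativeDimension.rank_kaehlerDifferential (R := k) (S := S) 1]
  simp

theorem maximalIdeal_stalk_isPrincipal {k : Type u} [Field k] [PerfectField k] {X : Scheme.{u}}
    (f : X ⟶ Spec (CommRingCat.of k)) [SmoothOfRelativeDimension 1 f] (x : X) :
    (IsLocalRing.maximalIdeal (X.presheaf.stalk x)).IsPrincipal := by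
  obtain ⟨U, -, V, hV, hxV, e, hsm⟩ :=
    SmoothOfRelativeDimension.exists_isStandardSmoothOfRelativeDimension (n := 1) (f := f) x
  obtain rfl : U = ⊤ := by
    ext y
    simpa [Subsingleton.elim (α := PrimeSpectrum k) y (f x)] using e hxV
  let φ : k →+* Γ(X, V) := (f.appLE ⊤ V e).hom.comp
    (Scheme.ΓSpecIso (CommRingCat.of k)).symm.commRingCatIsoToRingEquiv.toRingHom
  let _ : Algebra k Γ(X, V) := φ.toAlgebra
  let _ : Algebra Γ(X, V) (X.presheaf.stalk x) := (X.presheaf.germ V x hxV).hom.toAlgebra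
  let _ : Algebra k (X.presheaf.stalk x) := ((algebraMap Γ(X, V) _).comp φ).toAlgebra
  have : IsScalarTower k Γ(X, V) (X.presheaf.stalk x) := .of_algebraMap_eq' rfl
  have : Algebra.IsStandardSmoothOfRelativeDimension 1 k Γ(X, V) :=
    RingHom.isStandardSmoothOfRelativeDimension_respectsIso.right _ _ hsm
  have : Smooth f := SmoothOfRelativeDimension.smooth 1 f
  have : IsLocallyNoetherian X := LocallyOfFiniteType.isLocallyNoetherian f
  have : IsLocalization.AtPrime (X.presheaf.stalk x) (hV.primeIdealOf ⟨x, hxV⟩).asIdeal :=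
    hV.isLocalization_stalk ⟨x, hxV⟩
  exact maximalIdeal_isPrincipal_of_isStandardSmooth k Γ(X, V) (hV.primeIdealOf ⟨x, hxV⟩).asIdeal

end Smooth

section FiberRing

variable {k A V M : Type} [Field k] [CommRing A] [Algebra k A] [AddCommGroup V] [Module k V]
  [AddCommGroup M] [Module A M] (g : V →ₛₗ[algebraMap k A] M) (v : Module.Dual k V) (s₀ : V)
  (h : v s₀ ≠ 0)

/-- The restriction to the fibre over `[v]` of the functions on the chart `D₊(g s₀)` of `ℙ(M)`. -/
def fiberMap : ProjChart A (g s₀) →ₐ[A] FiberRing g v s₀ h :=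
  Ideal.Quotient.mkₐ A ((RingHom.ker (pointEval v s₀ h)).map (chartMap g s₀))

theorem fiberMap_surjective : Function.Surjective (fiberMap g v s₀ h) :=
  Ideal.Quotient.mkₐ_surjective A _

theorem fiberMap_chartMap {z : ProjChart k s₀} (hz : pointEval v s₀ h z = 0) :
    fiberMap g v s₀ h (chartMap g s₀ z) = 0 :=
  Ideal.Quotient.eq_zero_iff_mem.mpr (Ideal.mem_map_of_mem _ hz)

theorem fiberMap_chartCoord (s : V) :
    fiberMap g v s₀ h (chartCoord A (g s₀) (g s)) =
      algebraMap A (FiberRing g v s₀ h) (algebraMap k A ((v s₀)⁻¹ * v s)) := by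
  have hcoord : chartMap g s₀ (chartCoord k s₀ s) = chartCoord A (g s₀) (g s) :=
    chartLift_coord _ _ _ _ _
  have hconst (c : k) : chartMap g s₀ (algebraMap k _ c) = algebraMap A _ (algebraMap k A c) :=
    chartLift_algebraMap _ _ _ _ _
  have hpoint : pointEval v s₀ h (chartCoord k s₀ s) =
      pointEval v s₀ h (algebraMap k _ ((v s₀)⁻¹ * v s)) :=
    (chartLift_coord _ _ _ _ _).trans (chartLift_algebraMap s₀ (RingHom.id k) _ _ _).symm
  have hfiber := fiberMap_chartMap g v s₀ h ((map_sub _ _ _).trans (sub_eq_zero.mpr hpoint))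
  rwa [map_sub, map_sub, hcoord, hconst, AlgHom.commutes, sub_eq_zero] at hfiber

theorem algebraMap_fiberRing_surjective (hg : Submodule.span A (Set.range g) = ⊤) :
    Function.Surjective (algebraMap A (FiberRing g v s₀ h)) := by
  let q : SymmetricAlgebra A M →ₐ[A] FiberRing g v s₀ h :=
    (fiberMap g v s₀ h).comp (toChart A (g s₀))
  have hq : Function.Surjective q :=
    (fiberMap_surjective g v s₀ h).comp (Ideal.Quotient.mkₐ_surjective A _)
  have hcoord : Submodule.span A (Set.range g) ≤
      (Subalgebra.toSubmodule ⊥).comap (q.toLinearMap ∘ₗ SymmetricAlgebra.ι A M) := by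
    rw [Submodule.span_le]
    rintro _ ⟨s, rfl⟩
    exact Algebra.mem_bot.mpr ⟨_, (fiberMap_chartCoord g v s₀ h s).symm⟩
  intro b
  obtain ⟨p, rfl⟩ := hq b
  refine Algebra.mem_bot.mp ?_
  induction p using SymmetricAlgebra.induction with
  | algebraMap r => rw [AlgHom.commutes]; exact Subalgebra.algebraMap_mem _ _
  | ι m => exact hcoord (hg ▸ Submodule.mem_top)
  | mul a b ha hb => rw [map_mul]; exact mul_mem ha hb
  | add a b ha hb => rw [map_add]; exact add_mem ha hb

theorem algebraMap_fiberRing_eq_zero {ι : Type*} (t : Finset ι) (f : ι → A) (s : ι → V)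
    (hf : ∑ i ∈ t, f i • g (s i) = 0) :
    algebraMap A (FiberRing g v s₀ h) (∑ i ∈ t, f i * algebraMap k A (v (s i))) = 0 := by
  have hv (i : ι) : f i * algebraMap k A (v (s i)) =
      algebraMap k A (v s₀) * (f i * algebraMap k A ((v s₀)⁻¹ * v (s i))) := by
    rw [mul_left_comm, ← map_mul, mul_inv_cancel_left₀ h]
  calc algebraMap A (FiberRing g v s₀ h) (∑ i ∈ t, f i * algebraMap k A (v (s i)))
      = algebraMap A _ (algebraMap k A (v s₀)) *
          fiberMap g v s₀ h (chartCoord A (g s₀) (∑ i ∈ t, f i • g (s i))) := by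
        simp only [hv, ← Finset.mul_sum, map_mul, map_sum, map_smul, fiberMap_chartCoord,
          Algebra.smul_def, AlgHom.commutes]
    _ = 0 := by rw [hf, map_zero, map_zero, mul_zero]

end FiberRing

section ModuleMorphisms

variable {X : Scheme.{0}} {M N K : X.Modules}

/-- A morphism of `𝒪_X`-modules as a linear map on sections over `U`. -/
def sectionsMap (U : X.Opens) : (M ⟶ N) →+ (Γ(M, U) →ₗ[Γ(X, U)] Γ(N, U)) where
  toFun φ :=
    { toFun := φ.app U
      map_add' := map_add (φ.app U).hom
      map_smul' := φ.app_smul }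
  map_zero' := rfl
  map_add' _ _ := rfl

theorem sectionsMap_id (U : X.Opens) : sectionsMap U (𝟙 M) = LinearMap.id := rfl

theorem sectionsMap_comp (φ : M ⟶ N) (ψ : N ⟶ K) (U : X.Opens) :
    sectionsMap U (φ ≫ ψ) = sectionsMap U ψ ∘ₗ sectionsMap U φ := rfl

theorem sectionsMap_map (φ : M ⟶ N) {U V : X.Opens} (h : V ≤ U) (m : Γ(M, U)) :
    sectionsMap V φ (M.presheaf.map (homOfLE h).op m) =
      N.presheaf.map (homOfLE h).op (sectionsMap U φ m) :=
  congr($(φ.mapPresheaf.naturality (homOfLE h).op) m)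

theorem map_map (M : X.Modules) {U V W : X.Opens} (h : V ≤ U) (h' : W ≤ V) (m : Γ(M, U)) :
    M.presheaf.map (homOfLE h').op (M.presheaf.map (homOfLE h).op m) =
      M.presheaf.map (homOfLE (h'.trans h)).op m := by
  rw [← ConcreteCategory.comp_apply, ← Functor.map_comp]
  rfl

theorem germ_map (M : X.Modules) {U V : X.Opens} (h : V ≤ U) {x : X} (hx : x ∈ V) (m : Γ(M, U)) :
    M.presheaf.germ V x hx (M.presheaf.map (homOfLE h).op m) = M.presheaf.germ U x (h hx) m :=
  TopCat.Presheaf.germ_res_apply M.presheaf (homOfLE h) x hx m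

/-- The map on stalks at `x` induced by a morphism of `𝒪_X`-modules. -/
def stalkMap (x : X) :
    (M ⟶ N) →+ (M.presheaf.stalk x →ₗ[X.presheaf.stalk x] N.presheaf.stalk x) where
  toFun φ :=
    { toFun := (TopCat.Presheaf.stalkFunctor Ab x).map φ.mapPresheaf
      map_add' := map_add ((TopCat.Presheaf.stalkFunctor Ab x).map φ.mapPresheaf).hom
      map_smul' := fun r m => by
        obtain ⟨U, hU, m, rfl⟩ := M.presheaf.exists_germ_eq m
        obtain ⟨V, hVU, hV, r, rfl⟩ := X.presheaf.exists_le_germ_eq r hU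
        have hφ (m : Γ(M, V)) : (TopCat.Presheaf.stalkFunctor Ab x).map φ.mapPresheaf
            (M.presheaf.germ V x hV m) = N.presheaf.germ V x hV (φ.app V m) :=
          TopCat.Presheaf.stalkFunctor_map_germ_apply V x hV φ.mapPresheaf m
        rw [← germ_map M hVU hV m, ← germ_smul, RingHom.id_apply]
        exact (hφ _).trans <| (congrArg _ (φ.app_smul r _)).trans <|
          (germ_smul N hV r _).trans (congrArg (_ • ·) (hφ _).symm) }
  map_zero' := by
    ext m
    obtain ⟨U, hU, m, rfl⟩ := M.presheaf.exists_germ_eq m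
    exact (TopCat.Presheaf.stalkFunctor_map_germ_apply U x hU _ m).trans (map_zero _)
  map_add' φ ψ := by
    ext m
    obtain ⟨U, hU, m, rfl⟩ := M.presheaf.exists_germ_eq m
    exact (TopCat.Presheaf.stalkFunctor_map_germ_apply U x hU _ m).trans <|
      (map_add (N.presheaf.germ U x hU).hom _ _).trans <| congrArg₂ (· + ·)
        (TopCat.Presheaf.stalkFunctor_map_germ_apply U x hU φ.mapPresheaf m).symm
        (TopCat.Presheaf.stalkFunctor_map_germ_apply U x hU ψ.mapPresheaf m).symm

theorem stalkMap_germ (φ : M ⟶ N) {x : X} {U : X.Opens} (hx : x ∈ U) (m : Γ(M, U)) :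
    stalkMap x φ (M.presheaf.germ U x hx m) = N.presheaf.germ U x hx (sectionsMap U φ m) :=
  TopCat.Presheaf.stalkFunctor_map_germ_apply U x hx φ.mapPresheaf m

theorem stalkMap_id (x : X) : stalkMap x (𝟙 M) = LinearMap.id := by
  ext m
  obtain ⟨U, hU, m, rfl⟩ := M.presheaf.exists_germ_eq m
  exact stalkMap_germ (𝟙 M) hU m

theorem stalkMap_comp (φ : M ⟶ N) (ψ : N ⟶ K) (x : X) :
    stalkMap x (φ ≫ ψ) = stalkMap x ψ ∘ₗ stalkMap x φ := by
  ext m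
  obtain ⟨U, hU, m, rfl⟩ := M.presheaf.exists_germ_eq m
  simp only [LinearMap.comp_apply, stalkMap_germ, sectionsMap_comp]

theorem hom_ext_of_stalkMap {φ ψ : M ⟶ N} (h : ∀ x, stalkMap x φ = stalkMap x ψ) : φ = ψ := by
  refine Scheme.Modules.hom_ext _ _ fun U => ?_
  ext m
  refine TopCat.Presheaf.section_ext (⟨N.presheaf, N.isSheaf⟩ : TopCat.Sheaf Ab X) U _ _
    fun x hx => ?_
  exact (stalkMap_germ φ hx m).symm.trans ((congr($(h x) _)).trans (stalkMap_germ ψ hx m))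

end ModuleMorphisms

section Frames

variable {X : Scheme.{0}} {r : ℕ} {M : X.Modules} {U : X.Opens} {s : Fin r → Γ(M, U)}

/-- The sections `s₁, …, s_r` of `M` over `U` are a basis of `M(V)` for all open `V ⊆ U`, so that
`M` is a vector bundle if it has a frame near every point. -/
def IsFrame (M : X.Modules) {U : X.Opens} (s : Fin r → Γ(M, U)) : Prop :=
  ∀ (V : X.Opens) (h : V ≤ U), Function.Bijective fun f : Fin r → Γ(X, V) =>
    ∑ i, f i • M.presheaf.map (homOfLE h).op (s i)

theorem germ_sum_smul {V : X.Opens} (h : V ≤ U) {x : X} (hx : x ∈ V) (s : Fin r → Γ(M, U))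
    (f : Fin r → Γ(X, V)) :
    M.presheaf.germ V x hx (∑ i, f i • M.presheaf.map (homOfLE h).op (s i)) =
      ∑ i, X.presheaf.germ V x hx (f i) • M.presheaf.germ U x (h hx) (s i) := by
  simp only [map_sum, germ_smul, germ_map]

theorem exists_le_forall_germ_eq {ι : Type*} [Finite ι] {x : X} (hx : x ∈ U)
    (g : ι → X.presheaf.stalk x) :
    ∃ (V : X.Opens) (_ : V ≤ U) (hV : x ∈ V) (f : ι → Γ(X, V)),
      ∀ i, X.presheaf.germ V x hV (f i) = g i := by
  have := Fintype.ofFinite ι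
  choose V _ hxV f hf using fun i => X.presheaf.exists_le_germ_eq (g i) hx
  have hxW : x ∈ U ⊓ Finset.univ.inf V :=
    ⟨hx, by simpa [Opens.coe_finset_inf] using hxV⟩
  have hWV (i : ι) : U ⊓ Finset.univ.inf V ≤ V i :=
    inf_le_right.trans (Finset.inf_le (Finset.mem_univ i))
  exact ⟨_, inf_le_left, hxW, fun i => X.presheaf.map (homOfLE (hWV i)).op (f i), fun i =>
    (TopCat.Presheaf.germ_res_apply X.presheaf (homOfLE (hWV i)) x hxW (f i)).trans (hf i)⟩

theorem IsFrame.linearIndependent (hs : IsFrame M s) {x : X} (hx : x ∈ U) :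
    LinearIndependent (X.presheaf.stalk x) fun i => M.presheaf.germ U x hx (s i) := by
  rw [Fintype.linearIndependent_iff]
  intro g hg
  obtain ⟨V, hVU, hxV, f, hf⟩ := exists_le_forall_germ_eq hx g
  have hgerm : M.presheaf.germ V x hxV (∑ i, f i • M.presheaf.map (homOfLE hVU).op (s i)) =
      M.presheaf.germ V x hxV 0 := by
    rw [germ_sum_smul, map_zero, ← hg]
    simp only [hf]
  obtain ⟨W, hxW, i, j, hW⟩ := M.presheaf.germ_eq x hxV hxV _ _ hgerm
  have hres : (fun j => X.presheaf.map i.op (f j)) = 0 := by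
    refine (hs W (i.le.trans hVU)).1 ?_
    simp only [Pi.zero_apply, zero_smul, Finset.sum_const_zero]
    rw [map_zero, map_sum] at hW
    rw [← hW]
    refine Finset.sum_congr rfl fun j _ => ?_
    rw [Scheme.Modules.map_smul]
    exact congrArg _ (map_map M hVU i.le (s j)).symm
  intro k
  rw [← hf k, ← TopCat.Presheaf.germ_res_apply X.presheaf i x hxW, congrFun hres k, Pi.zero_apply,
    map_zero]

theorem IsFrame.span_germ (hs : IsFrame M s) {x : X} (hx : x ∈ U) :
    ⊤ ≤ Submodule.span (X.presheaf.stalk x)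
      (Set.range fun i => M.presheaf.germ U x hx (s i)) := by
  rintro m -
  obtain ⟨V, hVU, hV, m, rfl⟩ := M.presheaf.exists_le_germ_eq m hx
  obtain ⟨f, rfl⟩ := (hs V hVU).2 m
  rw [germ_sum_smul]
  exact Submodule.sum_mem _ fun i _ =>
    Submodule.smul_mem _ _ (Submodule.subset_span (Set.mem_range_self i))

/-- The basis of the stalk `M_x` given by the germs of a frame. -/
def IsFrame.stalkBasis (hs : IsFrame M s) {x : X} (hx : x ∈ U) :
    Module.Basis (Fin r) (X.presheaf.stalk x) (M.presheaf.stalk x) :=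
  .mk (hs.linearIndependent hx) (hs.span_germ hx)

theorem IsFrame.stalkBasis_apply (hs : IsFrame M s) {x : X} (hx : x ∈ U) (i : Fin r) :
    hs.stalkBasis hx i = M.presheaf.germ U x hx (s i) :=
  Module.Basis.mk_apply _ _ i

end Frames

section StructureModule

variable {X : Scheme.{0}}

/-- The unit section `1` of `𝒪_X` over `U`. -/
def unitSection (U : X.Opens) : Γ(structureModule X, U) := ofFunction 1

theorem map_unitSection {U V : X.Opens} (h : V ≤ U) :
    (structureModule X).presheaf.map (homOfLE h).op (unitSection U) = unitSection V :=
  map_one (X.presheaf.map (homOfLE h).op).hom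

theorem asFunction_smul_unitSection {U : X.Opens} (f : Γ(structureModule X, U)) :
    asFunction f • unitSection U = f :=
  mul_one (asFunction f)

theorem isFrame_unitSection (U : X.Opens) :
    IsFrame (structureModule X) (fun _ : Fin 1 => unitSection U) := by
  intro V h
  have hsum (f : Fin 1 → Γ(X, V)) :
      ∑ i, f i • (structureModule X).presheaf.map (homOfLE h).op (unitSection U) =
        ofFunction (f 0) := by
    rw [Fin.sum_univ_one, map_unitSection]
    exact mul_one (f 0)
  simp only [hsum]
  exact (Equiv.funUnique (Fin 1) Γ(X, V)).bijective

theorem isVectorBundle_structureModule : IsVectorBundle (structureModule X) 1 :=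
  fun _ => ⟨⊤, trivial, _, isFrame_unitSection ⊤⟩

/-- The stalk of the module `𝒪_X` at `x` is free on the germ of the unit section. -/
def unitBasis (x : X) :
    Module.Basis (Fin 1) (X.presheaf.stalk x) ((structureModule X).presheaf.stalk x) :=
  (isFrame_unitSection ⊤).stalkBasis (Opens.mem_top x)

theorem unitBasis_apply {U : X.Opens} {x : X} (hx : x ∈ U) (i : Fin 1) :
    unitBasis x i = (structureModule X).presheaf.germ U x hx (unitSection U) := by
  rw [unitBasis, IsFrame.stalkBasis_apply, ← map_unitSection (le_top : U ≤ ⊤), germ_map]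

theorem unitBasis_repr_germ {U : X.Opens} {x : X} (hx : x ∈ U) (f : Γ(structureModule X, U)) :
    (unitBasis x).repr ((structureModule X).presheaf.germ U x hx f) 0 =
      X.presheaf.germ U x hx (asFunction f) := by
  rw [← asFunction_smul_unitSection f, germ_smul, ← unitBasis_apply hx 0, map_smul,
    Module.Basis.repr_self, Finsupp.smul_single, Finsupp.single_eq_same, smul_eq_mul, mul_one,
    asFunction_smul_unitSection]

theorem sectionsMap_sectionHom_unitSection {M : X.Modules} (s : Γ(M, ⊤)) :
    sectionsMap ⊤ (sectionHom M s) (unitSection ⊤) = s :=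
  (sectionHom_app M s ⊤ _).trans ((one_smul _ _).trans congr($(M.presheaf.map_id (op ⊤)) s))

theorem structureModule_hom_ext {M : X.Modules} {σ τ : structureModule X ⟶ M}
    (h : sectionsMap ⊤ σ (unitSection ⊤) = sectionsMap ⊤ τ (unitSection ⊤)) : σ = τ := by
  refine hom_ext_of_stalkMap fun x => (unitBasis x).ext fun i => ?_
  rw [unitBasis_apply (Opens.mem_top x), stalkMap_germ, stalkMap_germ, h]

theorem sectionHom_comp {M N : X.Modules} (s : Γ(M, ⊤)) (φ : M ⟶ N) :
    sectionHom M s ≫ φ = sectionHom N (sectionsMap ⊤ φ s) :=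
  structureModule_hom_ext <| by
    rw [sectionsMap_comp, LinearMap.comp_apply, sectionsMap_sectionHom_unitSection,
      sectionsMap_sectionHom_unitSection]

end StructureModule

section Splittings

/-- The isomorphism `B ≅ A ⊕ C` of a split short exact sequence of modules. -/
def splitEquiv {R A B C : Type*} [Semiring R] [AddCommMonoid A] [Module R A] [AddCommMonoid B]
    [Module R B] [AddCommMonoid C] [Module R C] {f : A →ₗ[R] B} {g : B →ₗ[R] C} {r : B →ₗ[R] A}
    {s : C →ₗ[R] B} (hgf : g ∘ₗ f = 0) (hrf : r ∘ₗ f = .id) (hrs : r ∘ₗ s = 0)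
    (hgs : g ∘ₗ s = .id) (hid : f ∘ₗ r + s ∘ₗ g = .id) : B ≃ₗ[R] A × C :=
  .ofLinearMap (r.prod g) (f.coprod s)
    (by simp only [LinearMap.prod_comp, LinearMap.comp_coprod, hrf, hrs, hgf, hgs,
      ← LinearMap.fst_eq_coprod, ← LinearMap.snd_eq_coprod, LinearMap.pair_fst_snd])
    (by rw [LinearMap.coprod_comp_prod, hid])

/-- As `L ≅ ⋀²(R × L)`, a basis `e₀, e₁` of `R × L` makes `L` free on the image of `e₀ ∧ e₁`. -/
theorem bijective_smul_minor {R L : Type*} [CommRing R] [AddCommGroup L] [Module R L]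
    {e : Fin 2 → R × L} (he : Function.Bijective fun f : Fin 2 → R => ∑ i, f i • e i) :
    Function.Bijective fun f : Fin 1 → R =>
      ∑ i, f i • ((e 0).1 • (e 1).2 - (e 1).1 • (e 0).2) := by
  simp only [Fin.sum_univ_two, Fin.sum_univ_one] at he ⊢
  obtain ⟨c, hc⟩ := he.2 (1, 0)
  have hc₁ : c 0 * (e 0).1 + c 1 * (e 1).1 = 1 := congrArg Prod.fst hc
  constructor
  · refine fun f g hfg => funext fun i => ?_
    rw [Subsingleton.elim i 0]
    have hrel := @he.1 ![-(f 0 * (e 1).1), f 0 * (e 0).1] ![-(g 0 * (e 1).1), g 0 * (e 0).1] <| by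
      ext
      · simp only [Matrix.cons_val_zero, Matrix.cons_val_one, Prod.fst_add, Prod.smul_fst,
          smul_eq_mul]
        ring
      · simp only [Matrix.cons_val_zero, Matrix.cons_val_one, Prod.snd_add, Prod.smul_snd]
        linear_combination (norm := module) hfg
    have h₀ : f 0 * (e 1).1 = g 0 * (e 1).1 := neg_injective (congrFun hrel 0)
    have h₁ : f 0 * (e 0).1 = g 0 * (e 0).1 := congrFun hrel 1
    linear_combination (g 0 - f 0) * hc₁ + c 0 * h₁ + c 1 * h₀
  · intro z
    obtain ⟨p, hp⟩ := he.2 (0, z)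
    have hp₁ : p 0 * (e 0).1 + p 1 * (e 1).1 = 0 := congrArg Prod.fst hp
    have hp₂ : p 0 • (e 0).2 + p 1 • (e 1).2 = z := congrArg Prod.snd hp
    refine ⟨fun _ => c 0 * p 1 - c 1 * p 0, ?_⟩
    linear_combination (norm := module)
      hc₁ • (p 1 • (e 1).2 + p 0 • (e 0).2) - hp₁ • (c 1 • (e 1).2 + c 0 • (e 0).2) + hp₂

variable {X : Scheme.{0}} {S : ShortComplex X.Modules}

/-- A split short exact sequence of `𝒪_X`-modules is split on sections over `U`. -/
def sectionsEquiv (sp : S.Splitting) (U : X.Opens) :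
    Γ(S.X₂, U) ≃ₗ[Γ(X, U)] Γ(S.X₁, U) × Γ(S.X₃, U) :=
  splitEquiv (f := sectionsMap U S.f) (g := sectionsMap U S.g) (r := sectionsMap U sp.r)
    (s := sectionsMap U sp.s)
    (by rw [← sectionsMap_comp, S.zero, map_zero])
    (by rw [← sectionsMap_comp, sp.f_r, sectionsMap_id])
    (by rw [← sectionsMap_comp, sp.s_r, map_zero])
    (by rw [← sectionsMap_comp, sp.s_g, sectionsMap_id])
    (by rw [← sectionsMap_comp, ← sectionsMap_comp, ← map_add, sp.id, sectionsMap_id])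

/-- A split short exact sequence of `𝒪_X`-modules is split on the stalks at `x`. -/
def stalkEquiv (sp : S.Splitting) (x : X) :
    S.X₂.presheaf.stalk x ≃ₗ[X.presheaf.stalk x] S.X₁.presheaf.stalk x × S.X₃.presheaf.stalk x :=
  splitEquiv (f := stalkMap x S.f) (g := stalkMap x S.g) (r := stalkMap x sp.r)
    (s := stalkMap x sp.s)
    (by rw [← stalkMap_comp, S.zero, map_zero])
    (by rw [← stalkMap_comp, sp.f_r, stalkMap_id])
    (by rw [← stalkMap_comp, sp.s_r, map_zero])
    (by rw [← stalkMap_comp, sp.s_g, stalkMap_id])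
    (by rw [← stalkMap_comp, ← stalkMap_comp, ← map_add, sp.id, stalkMap_id])

/-- The sections of the module `𝒪_X` over `U` are the regular functions on `U`. -/
def functionEquiv (U : X.Opens) : Γ(structureModule X, U) ≃ₗ[Γ(X, U)] Γ(X, U) where
  toFun := asFunction
  invFun := ofFunction
  map_add' _ _ := rfl
  map_smul' _ _ := rfl
  left_inv _ := rfl
  right_inv _ := rfl

theorem isVectorBundle_of_splitting {E L : X.Modules} {σ : structureModule X ⟶ E} {q : E ⟶ L}
    {w : σ ≫ q = 0} (sp : (ShortComplex.mk σ q w).Splitting) (hE : IsVectorBundle E 2) :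
    IsVectorBundle L 1 := by
  intro x
  obtain ⟨U, hxU, e, he⟩ := hE x
  let ρ (V : X.Opens) : Γ(E, V) ≃ₗ[Γ(X, V)] Γ(X, V) × Γ(L, V) :=
    sectionsEquiv sp V ≪≫ₗ (functionEquiv V).prodCongr (.refl _ _)
  have hρ₁ {V : X.Opens} (h : V ≤ U) (m : Γ(E, U)) :
      (ρ V (E.presheaf.map (homOfLE h).op m)).1 = X.presheaf.map (homOfLE h).op (ρ U m).1 :=
    sectionsMap_map sp.r h m
  have hρ₂ {V : X.Opens} (h : V ≤ U) (m : Γ(E, U)) :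
      (ρ V (E.presheaf.map (homOfLE h).op m)).2 = L.presheaf.map (homOfLE h).op (ρ U m).2 :=
    sectionsMap_map q h m
  refine ⟨U, hxU, fun _ => (ρ U (e 0)).1 • (ρ U (e 1)).2 - (ρ U (e 1)).1 • (ρ U (e 0)).2,
    fun V h => ?_⟩
  have key := bijective_smul_minor (e := fun i => ρ V (E.presheaf.map (homOfLE h).op (e i))) <| by
    simpa only [Function.comp_def, map_sum, map_smul] using (ρ V).bijective.comp (he V h)
  simpa only [hρ₁, hρ₂, map_sub, Scheme.Modules.map_smul] using key

end Splittings

variable {C : SmoothProjectiveCurve} {M N : C.X.Modules}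

section Degree

theorem genericPoint_mem {U : C.X.Opens} {x : C.X} (hx : x ∈ U) : genericPoint C.X ∈ U :=
  ((genericPoint_spec C.X).specializes trivial).mem_open U.2 hx

theorem toGeneric_germ (M : C.X.Modules) {x : C.X} {U : C.X.Opens} (hx : x ∈ U) (m : Γ(M, U)) :
    toGeneric M x (M.presheaf.germ U x hx m) =
      M.presheaf.germ U (genericPoint C.X) (genericPoint_mem hx) m :=
  TopCat.Presheaf.germ_stalkSpecializes_apply M.presheaf hx _ m

theorem toGeneric_stalkMap (φ : M ⟶ N) (x : C.X) (m : M.presheaf.stalk x) :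
    toGeneric N x (stalkMap x φ m) = stalkMap (genericPoint C.X) φ (toGeneric M x m) := by
  obtain ⟨U, hU, m, rfl⟩ := M.presheaf.exists_germ_eq m
  rw [stalkMap_germ, toGeneric_germ, toGeneric_germ, stalkMap_germ]

theorem hasDegree_of_basis {ι : Type*} [Fintype ι] [DecidableEq ι] {r : ℕ} (e : ι ≃ Fin r)
    (b : Module.Basis ι C.X.functionField (M.presheaf.stalk (genericPoint C.X)))
    (c : ∀ x : ClosedPoint C,
      Module.Basis ι (C.X.presheaf.stalk x.1) (M.presheaf.stalk x.1))
    (A : ClosedPoint C → Matrix ι ι C.X.functionField)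
    (h : ∀ x j, b j = ∑ i, A x i j • toGeneric M x.1 (c x i)) :
    HasDegree M r (∑ᶠ x : ClosedPoint C, C.X.ord (A x).det x.1) := by
  refine ⟨b.reindex e, fun x => (c x).reindex e, fun x => (A x).reindex e e, fun x j => ?_, ?_⟩
  · simp only [Module.Basis.reindex_apply, h x, Matrix.reindex_apply, Matrix.submatrix_apply]
    exact e.symm.sum_comp _ |>.symm
  · simp only [Matrix.det_reindex_self]

theorem exists_hasDegree {r : ℕ} (hM : IsVectorBundle M r) : ∃ n, HasDegree M r n := by
  choose U hU s hs using hM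
  have hs (x : C.X) : IsFrame M (s x) := hs x
  let b (x : C.X) := (hs x).stalkBasis (genericPoint_mem (hU x))
  let b₀ := b (genericPoint C.X)
  refine ⟨_, hasDegree_of_basis (.refl _) b₀ (fun x => (hs x.1).stalkBasis (hU x.1))
    (fun x => (b x.1).toMatrix b₀) fun x j => ?_⟩
  simp only [IsFrame.stalkBasis_apply, toGeneric_germ]
  simpa only [b, IsFrame.stalkBasis_apply] using ((b x.1).sum_toMatrix_smul_self b₀ j).symm

theorem toGeneric_unitBasis (x : C.X) (i : Fin 1) :
    toGeneric (structureModule C.X) x (unitBasis x i) = unitBasis (genericPoint C.X) i := by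
  rw [unitBasis_apply (Opens.mem_top x), toGeneric_germ, ← unitBasis_apply]

theorem hasDegree_structureModule : HasDegree (structureModule C.X) 1 0 := by
  have h := hasDegree_of_basis (M := structureModule C.X) (.refl _) (unitBasis _)
    (fun x => unitBasis x.1) (fun _ => 1) fun x j => by
      simp only [toGeneric_unitBasis, Matrix.one_apply, ite_smul, one_smul, zero_smul,
        Finset.sum_ite_eq', Finset.mem_univ, if_true]
  have hord (x : C.X) : C.X.ord (1 : C.X.functionField) x = 0 := by
    have : Nonempty (⊤ : C.X.Opens) := ⟨⟨x, trivial⟩⟩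
    have hunit := Scheme.ord_of_isUnit (X := C.X) (U := ⊤) isUnit_one (x := x) trivial
    rwa [map_one] at hunit
  simpa [hord] using h

section Splittings

variable {E L : C.X.Modules} {σ : structureModule C.X ⟶ E} {q : E ⟶ L} {w : σ ≫ q = 0}

theorem toGeneric_stalkEquiv_symm {S : ShortComplex C.X.Modules} (sp : S.Splitting) (x : C.X)
    (m : S.X₁.presheaf.stalk x) (n : S.X₃.presheaf.stalk x) :
    toGeneric S.X₂ x ((stalkEquiv sp x).symm (m, n)) =
      (stalkEquiv sp (genericPoint C.X)).symm (toGeneric S.X₁ x m, toGeneric S.X₃ x n) := by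
  change toGeneric S.X₂ x (stalkMap x S.f m + stalkMap x sp.s n) =
    stalkMap _ S.f (toGeneric S.X₁ x m) + stalkMap _ sp.s (toGeneric S.X₃ x n)
  rw [map_add, toGeneric_stalkMap, toGeneric_stalkMap]

theorem hasDegree_of_splitting (sp : (ShortComplex.mk σ q w).Splitting) {r : ℕ} {n : ℤ}
    (hL : HasDegree L r n) : HasDegree E (1 + r) n := by
  obtain ⟨b, c, A, hA, rfl⟩ := hL
  let ψ (x : C.X) : ((structureModule C.X).presheaf.stalk x × L.presheaf.stalk x)
      ≃ₗ[C.X.presheaf.stalk x] E.presheaf.stalk x := (stalkEquiv sp x).symm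
  have h := hasDegree_of_basis (M := E) finSumFinEquiv (((unitBasis _).prod b).map (ψ _))
    (fun x => ((unitBasis x.1).prod (c x)).map (ψ x.1)) (fun x => Matrix.fromBlocks 1 0 0 (A x))
    fun x j => ?_
  · simpa using h
  · have hψ (m n) : toGeneric E x.1 (ψ x.1 (m, n)) = ψ _ (toGeneric _ x.1 m, toGeneric L x.1 n) :=
      toGeneric_stalkEquiv_symm sp x.1 m n
    rw [Fintype.sum_sum_type]
    rcases j with j | j <;>
      simp only [Module.Basis.map_apply, Module.Basis.prod_apply, Sum.elim_inl, Sum.elim_inr,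
        Function.comp_apply, LinearMap.inl_apply, LinearMap.inr_apply, hψ, map_zero,
        toGeneric_unitBasis]
    · rw [Subsingleton.elim j 0]
      simp
    · have hsum : ((0 : (structureModule C.X).presheaf.stalk (genericPoint C.X)), b j) =
          ∑ i, A x i j • (0, toGeneric L x.1 (c x i)) := by
        ext <;> simp [Prod.fst_sum, Prod.snd_sum, hA x j]
      simpa only [Matrix.fromBlocks_apply₁₂, Matrix.fromBlocks_apply₂₂, Matrix.zero_apply,
        zero_smul, Finset.sum_const_zero, zero_add, map_sum, map_smul] using congrArg (ψ _) hsum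

end Splittings

/-- As `E ≅ 𝒪_C ⊕ L` with `deg E = deg L`, stability would give `0 < deg L` from the subsheaf
`𝒪_C` and `deg L < 0` from the subsheaf `L`. -/
theorem not_isStable_of_retraction {E : C.X.Modules} (hE : IsVectorBundle E 2)
    {σ : structureModule C.X ⟶ E} {π : E ⟶ structureModule C.X} (hσπ : σ ≫ π = 𝟙 _) :
    ¬ IsStable E := by
  intro hst
  let S : ShortComplex C.X.Modules := .mk σ (Limits.cokernel.π σ) (Limits.cokernel.condition σ)
  have hepi : Epi S.g := inferInstanceAs (Epi (Limits.cokernel.π σ))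
  let sp : S.Splitting := .ofExactOfRetraction S
    (S.exact_of_g_is_cokernel (Limits.cokernelIsCokernel σ)) π hσπ hepi
  have hL : IsVectorBundle S.X₃ 1 := isVectorBundle_of_splitting sp hE
  obtain ⟨n, hn⟩ := exists_hasDegree hL
  have hEn : HasDegree E 2 n := hasDegree_of_splitting sp hn
  have hσ := hst _ σ isVectorBundle_structureModule (SplitMono.mk π hσπ).mono 0 n
    hasDegree_structureModule hEn
  have hs := hst S.X₃ sp.s hL (SplitMono.mk S.g sp.s_g).mono n n hn hEn
  omega

end Degree

section GlobalSections

/-- The `ℂ`-linear map on global sections induced by a morphism of `𝒪_C`-modules. -/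
def globalSectionsMap (φ : M ⟶ N) : H0 M →ₗ[ℂ] H0 N where
  toFun := sectionsMap ⊤ φ
  map_add' := map_add (sectionsMap ⊤ φ)
  map_smul' c s := (sectionsMap ⊤ φ).map_smul (constants ⊤ c) s

theorem germAt_globalSectionsMap (φ : M ⟶ N) (x : C.X) (s : H0 M) :
    germAt N x (globalSectionsMap φ s) = stalkMap x φ (germAt M x s) :=
  (stalkMap_germ φ (Opens.mem_top x) s).symm

theorem IsGloballyGenerated.hom_ext (hgg : IsGloballyGenerated M) {φ ψ : M ⟶ N}
    (h : globalSectionsMap φ = globalSectionsMap ψ) : φ = ψ :=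
  hom_ext_of_stalkMap fun x => LinearMap.ext_on_range (hgg x) fun s => by
    rw [← germAt_globalSectionsMap, ← germAt_globalSectionsMap, h]

theorem stalkMap_sectionHom (s : H0 M) (x : C.X) (i : Fin 1) :
    stalkMap x (sectionHom M s) (unitBasis x i) = germAt M x s := by
  rw [unitBasis_apply (Opens.mem_top x), stalkMap_germ, sectionsMap_sectionHom_unitSection]
  rfl

end GlobalSections

section TrivialBundle

variable {E : C.X.Modules}

/-- The basis of `H⁰(E)` that indexes the summands of `trivialBundle E`. -/
abbrev h0Basis (E : C.X.Modules) :
    Module.Basis (Module.Free.ChooseBasisIndex ℂ (H0 E)) ℂ (H0 E) :=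
  Module.Free.chooseBasis ℂ (H0 E)

/-- The inclusion of the `i`-th summand of `H⁰(E) ⊗ 𝒪_C`. -/
def trivialBundleι (E : C.X.Modules) (i : Module.Free.ChooseBasisIndex ℂ (H0 E)) :
    structureModule C.X ⟶ trivialBundle E :=
  Limits.Sigma.ι (fun _ => structureModule C.X) i

theorem trivialBundle_hom_ext {φ ψ : trivialBundle E ⟶ N}
    (h : ∀ i, trivialBundleι E i ≫ φ = trivialBundleι E i ≫ ψ) : φ = ψ :=
  Limits.Sigma.hom_ext _ _ h

/-- The morphism `H⁰(E) ⊗ 𝒪_C → N`, `s ⊗ f ↦ f ℓ(s)`, given by a linear map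
`ℓ : H⁰(E) → H⁰(N)`. -/
def trivialBundleDesc (ℓ : H0 E →ₗ[ℂ] H0 N) : trivialBundle E ⟶ N :=
  Limits.Sigma.desc fun i => sectionHom N (ℓ (h0Basis E i))

theorem trivialBundleι_desc (ℓ : H0 E →ₗ[ℂ] H0 N) (i : Module.Free.ChooseBasisIndex ℂ (H0 E)) :
    trivialBundleι E i ≫ trivialBundleDesc ℓ = sectionHom N (ℓ (h0Basis E i)) :=
  Limits.Sigma.ι_desc _ i

theorem evaluation_eq_trivialBundleDesc (E : C.X.Modules) :
    evaluation E = trivialBundleDesc LinearMap.id := rfl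

theorem trivialBundleDesc_comp (ℓ : H0 E →ₗ[ℂ] H0 M) (φ : M ⟶ N) :
    trivialBundleDesc ℓ ≫ φ = trivialBundleDesc (globalSectionsMap φ ∘ₗ ℓ) :=
  trivialBundle_hom_ext fun i => by
    rw [← Category.assoc, trivialBundleι_desc, trivialBundleι_desc, sectionHom_comp]
    rfl

theorem trivialBundleDesc_injective :
    Function.Injective (trivialBundleDesc : (H0 E →ₗ[ℂ] H0 N) → (trivialBundle E ⟶ N)) := by
  refine fun ℓ ℓ' h => (h0Basis E).ext fun i => ?_
  rw [← sectionsMap_sectionHom_unitSection (ℓ _), ← trivialBundleι_desc, h, trivialBundleι_desc,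
    sectionsMap_sectionHom_unitSection]

theorem exists_sum_comp_trivialBundleι_eq_id [Module.Finite ℂ (H0 E)] :
    ∃ p : Module.Free.ChooseBasisIndex ℂ (H0 E) → (trivialBundle E ⟶ structureModule C.X),
      ∑ i, p i ≫ trivialBundleι E i = 𝟙 (trivialBundle E) := by
  classical
  let p (i) : trivialBundle E ⟶ structureModule C.X :=
    Limits.Sigma.π (fun _ => structureModule C.X) i
  have hp_self (i) : trivialBundleι E i ≫ p i = 𝟙 _ := Limits.Sigma.ι_π_eq_id _ i
  have hp_ne {i j} (hij : i ≠ j) : trivialBundleι E i ≫ p j = 0 := Limits.Sigma.ι_π_of_ne _ hij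
  refine ⟨p, trivialBundle_hom_ext fun j => ?_⟩
  rw [Preadditive.comp_sum, Category.comp_id, Finset.sum_eq_single_of_mem j (Finset.mem_univ j)]
  · rw [← Category.assoc, hp_self, Category.id_comp]
  · intro i _ hij
    rw [← Category.assoc, hp_ne hij.symm, Limits.zero_comp]

theorem exists_stalkMap_trivialBundleDesc_eq_sum [Module.Finite ℂ (H0 E)] (x : C.X)
    (t : (trivialBundle E).presheaf.stalk x) :
    ∃ a : Module.Free.ChooseBasisIndex ℂ (H0 E) → C.X.presheaf.stalk x,
      ∀ (N : C.X.Modules) (ℓ : H0 E →ₗ[ℂ] H0 N),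
        stalkMap x (trivialBundleDesc ℓ) t = ∑ i, a i • germAt N x (ℓ (h0Basis E i)) := by
  obtain ⟨p, hp⟩ := exists_sum_comp_trivialBundleι_eq_id (E := E)
  refine ⟨fun i => (unitBasis x).repr (stalkMap x (p i) t) 0, fun N ℓ => ?_⟩
  have hsum : trivialBundleDesc ℓ = ∑ i, p i ≫ sectionHom N (ℓ (h0Basis E i)) := by
    simp only [← trivialBundleι_desc, ← Category.assoc, ← Preadditive.sum_comp, hp,
      Category.id_comp]
  rw [hsum, map_sum, LinearMap.sum_apply]
  refine Finset.sum_congr rfl fun i _ => ?_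
  have hrepr (u) : u = (unitBasis x).repr u 0 • unitBasis x 0 := by
    rw [← Fin.sum_univ_one fun j => (unitBasis x).repr u j • unitBasis x j,
      (unitBasis x).sum_repr]
  conv_lhs => rw [stalkMap_comp, LinearMap.comp_apply, hrepr (stalkMap x (p i) t), map_smul,
    stalkMap_sectionHom]

theorem evaluation_epi (hgg : IsGloballyGenerated E) : Epi (evaluation E) where
  left_cancellation φ ψ h := hgg.hom_ext <| trivialBundleDesc_injective <| by
    rwa [evaluation_eq_trivialBundleDesc, trivialBundleDesc_comp, trivialBundleDesc_comp] at h

end TrivialBundle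

section DualSpan

variable {E : C.X.Modules}

/-- The inclusion of the kernel of the evaluation into `H⁰(E) ⊗ 𝒪_C`. -/
def evalKernelι (E : C.X.Modules) : evalKernel E ⟶ trivialBundle E :=
  Limits.kernel.ι (evaluation E)

/-- The section of the dual span `Ē` given by `v ∈ H⁰(E)^*`: the restriction of `v ⊗ id` from
`H⁰(E) ⊗ 𝒪_C` to the kernel of the evaluation. -/
def dualSpanSection (v : Module.Dual ℂ (H0 E)) : DualSections (evalKernel E) :=
  evalKernelι E ≫ trivialBundleDesc (v.smulRight (unitSection ⊤ : H0 (structureModule C.X)))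

theorem exists_germ_dualSpanSection_eq_sum [Module.Finite ℂ (H0 E)] {U : C.X.Opens} {x : C.X}
    (hx : x ∈ U) (m : Γ(evalKernel E, U)) :
    ∃ a : Module.Free.ChooseBasisIndex ℂ (H0 E) → C.X.presheaf.stalk x,
      ∑ i, a i • germMap E x (h0Basis E i) = 0 ∧
      ∀ v : Module.Dual ℂ (H0 E),
        C.X.presheaf.germ U x hx (asFunction ((dualSpanSection v).app U m)) =
          ∑ i, a i * algebraMap ℂ (C.X.presheaf.stalk x) (v (h0Basis E i)) := by
  let m' := (evalKernel E).presheaf.germ U x hx m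
  obtain ⟨a, ha⟩ := exists_stalkMap_trivialBundleDesc_eq_sum x (stalkMap x (evalKernelι E) m')
  refine ⟨a, ?_, fun v => ?_⟩
  · have hκ : evalKernelι E ≫ trivialBundleDesc LinearMap.id = 0 :=
      Limits.kernel.condition (evaluation E)
    refine (ha E LinearMap.id).symm.trans ?_
    rw [← LinearMap.comp_apply, ← stalkMap_comp, hκ, map_zero, LinearMap.zero_apply]
  · have hunit (i) : germAt (structureModule C.X) x
        (v.smulRight (unitSection ⊤ : H0 (structureModule C.X)) (h0Basis E i)) =
          algebraMap ℂ (C.X.presheaf.stalk x) (v (h0Basis E i)) • unitBasis x 0 :=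
      (germAt_smul _ x _ _).trans congr(_ • $((unitBasis_apply (Opens.mem_top x) 0).symm))
    calc C.X.presheaf.germ U x hx (asFunction ((dualSpanSection v).app U m))
        = (unitBasis x).repr (stalkMap x (dualSpanSection v) m') 0 := by
          rw [stalkMap_germ, unitBasis_repr_germ]
          rfl
      _ = (unitBasis x).repr (∑ i, a i •
            algebraMap ℂ (C.X.presheaf.stalk x) (v (h0Basis E i)) • unitBasis x 0) 0 := by
          rw [dualSpanSection, stalkMap_comp, LinearMap.comp_apply, ha]
          simp only [hunit]
      _ = ∑ i, a i * algebraMap ℂ (C.X.presheaf.stalk x) (v (h0Basis E i)) := by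
          simp only [map_sum, Finsupp.finsetSum_apply, map_smul, Module.Basis.repr_self,
            Finsupp.smul_single, Finsupp.single_eq_same, smul_eq_mul, mul_one]

theorem dualSpanSection_mem_dualTwistSections [Module.Finite ℂ (H0 E)]
    (hgg : IsGloballyGenerated E) {o : PH E} {d : ClosedPoint C →₀ ℕ}
    (hd : ∀ x, (d x : ℕ∞) ≤ fiberDivisor E o x) :
    dualSpanSection o.rep ∈ dualTwistSections (evalKernel E) d := by
  intro U m x hx
  obtain ⟨a, hrel, hval⟩ := exists_germ_dualSpanSection_eq_sum hx m
  rw [hval]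
  exact mem_maximalIdeal_pow_of_le_length
    (B := FiberRing (germMap E x.1) o.rep (exists_rep_ne_zero o).choose
      (exists_rep_ne_zero o).choose_spec)
    (maximalIdeal_stalk_isPrincipal C.str x.1) (algebraMap_fiberRing_surjective _ _ _ _ (hgg x.1))
    (algebraMap_fiberRing_eq_zero _ _ _ _ Finset.univ a _ hrel) (hd x)

theorem dualSpanSection_ne_zero (hgg : IsGloballyGenerated E)
    (hsplit : ∀ (σ : structureModule C.X ⟶ E) (π : E ⟶ structureModule C.X), σ ≫ π ≠ 𝟙 _)
    {v : Module.Dual ℂ (H0 E)} (hv : v ≠ 0) : dualSpanSection v ≠ 0 := by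
  intro h
  have := evaluation_epi hgg
  let π : E ⟶ structureModule C.X := Abelian.epiDesc (evaluation E) (trivialBundleDesc _) h
  have hπ : evaluation E ≫ π = trivialBundleDesc _ := Abelian.comp_epiDesc _ _ h
  rw [evaluation_eq_trivialBundleDesc, trivialBundleDesc_comp, LinearMap.comp_id] at hπ
  have hπv (s : H0 E) : sectionsMap ⊤ π s = v.smulRight (unitSection ⊤) s :=
    congr($(trivialBundleDesc_injective hπ) s)
  obtain ⟨t, ht⟩ : ∃ t, v t ≠ 0 := by
    by_contra! hvt
    exact hv (LinearMap.ext hvt)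
  refine hsplit (sectionHom E ((v t)⁻¹ • t)) π (structureModule_hom_ext ?_)
  rw [sectionHom_comp, sectionsMap_sectionHom_unitSection, hπv, LinearMap.smulRight_apply, map_smul,
    smul_eq_mul, inv_mul_cancel₀ ht, one_smul, sectionsMap_id, LinearMap.id_apply]

end DualSpan

end OcticScroll

end

open OcticScroll in
theorem h0_dual_span_twist_pos_general {C : SmoothProjectiveCurve} (E : C.X.Modules)
    [Module.Finite ℂ (H0 E)] (hgg : IsGloballyGenerated E)
    (hsplit : ∀ (σ : structureModule C.X ⟶ E) (π : E ⟶ structureModule C.X), σ ≫ π ≠ 𝟙 _)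
    (o : PH E) (d : ClosedPoint C →₀ ℕ) (hd : ∀ x, (d x : ℕ∞) ≤ fiberDivisor E o x) :
    1 ≤ h0DualSpanTwist E d := by
  have : Nontrivial (dualTwistSections (evalKernel E) d) :=
    Submodule.nontrivial_iff_ne_bot.mpr <| (Submodule.ne_bot_iff _).mpr
      ⟨_, dualSpanSection_mem_dualTwistSections hgg hd,
        dualSpanSection_ne_zero hgg hsplit o.rep_nonzero⟩
  exact Cardinal.one_le_iff_pos.mpr rank_pos

open OcticScroll in
/-- `C` is a smooth non-hyperelliptic complex projective curve of genus 3. `E` is a stable, globally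
generated rank-two bundle on `C` with `det E ≅ ω_C ⊗ ω_C` and `h⁰(E) = 4`. For `o ∈ Sing R`,
where `R ⊂ ℙ³ = ℙ(H⁰(E)^*)` is the tautological scroll, and for an effective divisor
`d ≤ p_* n^* o`, one has `h⁰(Ē(-d)) ≥ 1`. -/
theorem h0_dual_span_twist_pos (C : SmoothProjectiveCurve) (hgenus : genus C = 3)
    (hnonhyp : ¬ HasDegreeTwoMap C)
    (E : C.X.Modules) (hE : IsVectorBundle E 2)
    (hdet : Nonempty (detTwo E ≅ tensor (canonicalSheaf C) (canonicalSheaf C)))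
    (hstable : IsStable E) (hgg : IsGloballyGenerated E) (hh0 : h0 E = 4)
    (o : PH E) (ho : o ∈ singularLocus E)
    (d : ClosedPoint C →₀ ℕ) (hd : ∀ x, (d x : ℕ∞) ≤ fiberDivisor E o x) :
    1 ≤ h0DualSpanTwist E d := by
  have : Module.Finite ℂ (H0 E) := Module.finite_of_rank_eq_nat hh0
  exact h0_dual_span_twist_pos_general E hgg
    (fun _ _ hσπ => not_isStable_of_retraction hE hσπ hstable) o d hd
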